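/- arXiv:1111.2171 — 7 statements merged into one kernel-verified Lean document; each statement's English description precedes it below -/
import Mathlib

section
/- Let a be a real number with a > 0 and a² − 12a + 4 ≥ 0. Then the two inequalities |a − 2 + √(a² − 12a + 4)| < 4 and |a − 2 − √(a² − 12a + 4)| < 4 (real square root and real absolute value) both hold if and only if 0 < a ≤ 6 − 4√2. -/
/-!
The numbers `a - 2 ± √(a² - 12a + 4)` are the roots of `X² - 2(a - 2)X + 8a`, whose values at `4`
and `-4` are `32` and `16a`. Hence both roots lie in `(-4, 4)` exactly when `0 < a` and their
midpoint `a - 2` lies in `(-4, 4)`, that is, when `0 < a < 6`. As the discriminant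
`(a - 6)² - 32` is nonnegative, `a` avoids the interval `(6 - 4√2, 6 + 4√2)`, so `a < 6` improves
to `a ≤ 6 - 4√2`.
-/

theorem abs_add_sqrt_lt_and_abs_sub_sqrt_lt_iff {p d r : ℝ} :
    (|p + √d| < r ∧ |p - √d| < r) ↔ |p| < r ∧ d < (r - p) ^ 2 ∧ d < (r + p) ^ 2 := by
  have hd : 0 ≤ √d := Real.sqrt_nonneg d
  simp only [abs_lt]
  constructor
  · rintro ⟨⟨-, h_upper⟩, h_lower, -⟩
    refine ⟨⟨by linarith, by linarith⟩, ?_, ?_⟩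
    · exact (Real.sqrt_lt' (by linarith)).mp (by linarith)
    · exact (Real.sqrt_lt' (by linarith)).mp (by linarith)
  · rintro ⟨⟨hp_lower, hp_upper⟩, hd_sub, hd_add⟩
    have h_upper : √d < r - p := (Real.sqrt_lt' (by linarith)).mpr hd_sub
    have h_lower : √d < r + p := (Real.sqrt_lt' (by linarith)).mpr hd_add
    exact ⟨⟨by linarith, by linarith⟩, by linarith, by linarith⟩

theorem lt_iff_le_sub_sqrt_of_le_sq {x c k : ℝ} (hk : 0 < k) (h : k ≤ (x - c) ^ 2) :
    x < c ↔ x ≤ c - √k := by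
  constructor
  · intro hx
    have h_sqrt : √k ≤ c - x := Real.sqrt_le_iff.mpr ⟨by linarith, by rwa [sub_sq_comm]⟩
    linarith
  · exact fun hx ↦ hx.trans_lt (sub_lt_self c (Real.sqrt_pos.mpr hk))

theorem abs_lt_four_iff_general (a : ℝ) (hdisc : 0 ≤ a ^ 2 - 12 * a + 4) :
    (|a - 2 + √(a ^ 2 - 12 * a + 4)| < 4 ∧ |a - 2 - √(a ^ 2 - 12 * a + 4)| < 4) ↔
      (0 < a ∧ a ≤ 6 - 4 * √2) := by
  have h_right : a ^ 2 - 12 * a + 4 < (4 - (a - 2)) ^ 2 := by linarith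
  have h_left : a ^ 2 - 12 * a + 4 < (4 + (a - 2)) ^ 2 ↔ 0 < a := by
    constructor <;> intro h <;> linarith
  have h_mid : (|a - 2| < 4 ∧ 0 < a) ↔ 0 < a ∧ a < 6 := by
    rw [abs_lt]
    constructor
    · exact fun ⟨⟨_, _⟩, ha⟩ ↦ ⟨ha, by linarith⟩
    · exact fun ⟨ha, _⟩ ↦ ⟨⟨by linarith, by linarith⟩, ha⟩
  have h_sqrt : √32 = 4 * √2 := by
    rw [show (32 : ℝ) = 4 ^ 2 * 2 by norm_num, Real.sqrt_mul (by norm_num),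
      Real.sqrt_sq (by norm_num)]
  have h_gap : a < 6 ↔ a ≤ 6 - 4 * √2 := by
    rw [← h_sqrt]
    exact lt_iff_le_sub_sqrt_of_le_sq (by norm_num) (by linarith)
  rw [abs_add_sqrt_lt_and_abs_sub_sqrt_lt_iff, h_left, and_iff_right h_right, h_mid, h_gap]

/-- For `a > 0` with `a² - 12a + 4 ≥ 0`, the two inequalities
`|a - 2 + √(a² - 12a + 4)| < 4` and `|a - 2 - √(a² - 12a + 4)| < 4` both hold
if and only if `0 < a ≤ 6 - 4√2`. -/
theorem abs_lt_four_iff (a : ℝ) (ha : 0 < a) (hdisc : a ^ 2 - 12 * a + 4 ≥ 0) :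
    (|a - 2 + Real.sqrt (a ^ 2 - 12 * a + 4)| < 4 ∧
      |a - 2 - Real.sqrt (a ^ 2 - 12 * a + 4)| < 4) ↔
    (0 < a ∧ a ≤ 6 - 4 * Real.sqrt 2) :=
  abs_lt_four_iff_general a hdisc
end

section
/- Let a be a real number with 0 < a < 2 and let M_a be the 4×4 real matrix with rows (0, 1, a/2, a/2), (−1, 0, a/2, a/2), (0, 1, 0, 0), (0, 0, 1, 0). Then there exist constants C > 0 and ρ ∈ (0, 1), depending only on a, such that for every natural number j and every vector v ∈ ℝ⁴ one has ‖M_a^j v‖ ≤ C ρ^j ‖v‖, where ‖·‖ is the Euclidean norm on ℝ⁴. -/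
/-!
By Gelfand's formula the powers of a matrix decay geometrically as soon as its complex eigenvalues
lie in the open unit disc. The characteristic polynomial of `M_a` is biquadratic,
`X⁴ + (1 - a / 2) X² + a / 2`, so the squares of its eigenvalues are the roots of
`z² + (1 - a / 2) z + a / 2`, and for `0 < a < 2` the Schur–Cohn conditions `|p| < 1 + q` and
`q < 1` for a real quadratic `z² + p z + q` to have both roots in the open unit disc hold.
-/

open Asymptotics Filter Polynomial
open scoped NNReal ENNReal

section BanachAlgebra

variable {A : Type*} [NormedRing A] [NormedAlgebra ℂ A] [CompleteSpace A]

theorem isBigO_pow_of_spectralRadius_lt {a : A} {r : ℝ≥0} (h : spectralRadius ℂ a < r) :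
    (a ^ ·) =O[atTop] fun n : ℕ => (r : ℝ) ^ n := by
  have h_root : ∀ᶠ n : ℕ in atTop, (‖a ^ n‖₊ : ℝ≥0∞) ^ (1 / n : ℝ) < r :=
    (spectrum.pow_nnnorm_pow_one_div_tendsto_nhds_spectralRadius a).eventually_lt_const h
  refine .of_bound' ?_
  filter_upwards [h_root, eventually_gt_atTop 0] with n hn hn0
  have h_pow : (‖a ^ n‖₊ : ℝ≥0∞) ≤ (r : ℝ≥0∞) ^ n := by
    rw [one_div, ENNReal.rpow_inv_lt_iff (by positivity), ENNReal.rpow_natCast] at hn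
    exact hn.le
  have h_real : ‖a ^ n‖ ≤ (r : ℝ) ^ n := mod_cast h_pow
  exact h_real.trans (le_abs_self _)

theorem exists_norm_pow_le_of_spectralRadius_lt_one {a : A} (h : spectralRadius ℂ a < 1) :
    ∃ C > (0 : ℝ), ∃ ρ ∈ Set.Ioo (0 : ℝ) 1, ∀ n : ℕ, ‖a ^ n‖ ≤ C * ρ ^ n := by
  obtain ⟨r, har, hr1⟩ := ENNReal.lt_iff_exists_nnreal_btwn.1 h
  have hr0 : 0 < r := ENNReal.coe_pos.1 (bot_le.trans_lt har)
  obtain ⟨C, hC, hbound⟩ := bound_of_isBigO_nat_atTop (isBigO_pow_of_spectralRadius_lt har)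
  refine ⟨C, hC, r, ⟨mod_cast hr0, mod_cast hr1⟩, fun n => ?_⟩
  simpa using hbound (x := n) (by positivity)

end BanachAlgebra

section Frobenius

open scoped Matrix.Norms.Frobenius

variable {m n : Type*} [Fintype m] [Fintype n]

theorem frobenius_norm_mulVec_le {𝕜 : Type*} [RCLike 𝕜] (M : Matrix m n 𝕜)
    (v : EuclideanSpace 𝕜 n) : ‖WithLp.toLp 2 (M.mulVec v)‖ ≤ ‖M‖ * ‖v‖ := by
  rw [← Matrix.frobenius_norm_replicateCol (ι := Unit), Matrix.replicateCol_mulVec]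
  refine (Matrix.frobenius_norm_mul _ _).trans_eq ?_
  rw [Matrix.frobenius_norm_replicateCol]

variable [DecidableEq n] [Nonempty n]

theorem spectralRadius_map_ofReal_lt_one {M : Matrix n n ℝ}
    (hM : ∀ z : ℂ, aeval z M.charpoly = 0 → ‖z‖ < 1) :
    spectralRadius ℂ (M.map ((↑) : ℝ → ℂ)) < 1 := by
  refine spectrum.spectralRadius_lt_of_forall_lt (r := 1) _ fun z hz => hM z ?_
  rw [Matrix.mem_spectrum_iff_isRoot_charpoly] at hz
  rw [← eval_map_algebraMap, ← Matrix.charpoly_map]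
  exact hz

theorem exists_norm_pow_mulVec_le_of_forall_charpoly_root {M : Matrix n n ℝ}
    (hM : ∀ z : ℂ, aeval z M.charpoly = 0 → ‖z‖ < 1) :
    ∃ C > (0 : ℝ), ∃ ρ ∈ Set.Ioo (0 : ℝ) 1, ∀ (j : ℕ) (v : EuclideanSpace ℝ n),
      ‖WithLp.toLp 2 ((M ^ j).mulVec v)‖ ≤ C * ρ ^ j * ‖v‖ := by
  have : CompleteSpace (Matrix n n ℂ) := FiniteDimensional.complete ℂ _
  obtain ⟨C, hC, ρ, hρ, hpow⟩ :=
    exists_norm_pow_le_of_spectralRadius_lt_one (a := M.map ((↑) : ℝ → ℂ))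
      (spectralRadius_map_ofReal_lt_one hM)
  refine ⟨C, hC, ρ, hρ, fun j v => (frobenius_norm_mulVec_le _ v).trans ?_⟩
  gcongr
  calc ‖M ^ j‖ = ‖(M ^ j).map ((↑) : ℝ → ℂ)‖ :=
        (Matrix.frobenius_norm_map_eq _ _ Complex.norm_real).symm
    _ = ‖M.map ((↑) : ℝ → ℂ) ^ j‖ := congrArg norm (Matrix.map_pow M Complex.ofRealHom j)
    _ ≤ C * ρ ^ j := hpow j

end Frobenius

theorem norm_lt_one_of_quadratic_eq_zero {p q : ℝ} (hp : |p| < 1 + q) (hq : q < 1) {z : ℂ}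
    (hz : z ^ 2 + p * z + q = 0) : ‖z‖ < 1 := by
  obtain ⟨hp_lower, hp_upper⟩ := abs_lt.1 hp
  have h_re : z.re ^ 2 - z.im ^ 2 + p * z.re + q = 0 := by
    simpa [sq] using congrArg Complex.re hz
  have h_im : z.im * (2 * z.re + p) = 0 := by
    have : z.re * z.im + z.im * z.re + p * z.im = 0 := by simpa [sq] using congrArg Complex.im hz
    linear_combination this
  have h_normSq : z.re ^ 2 + z.im ^ 2 < 1 := by
    rcases mul_eq_zero.1 h_im with h_real | h_conj
    · rw [h_real] at h_re ⊢
      -- For real `x` with `|x| ≥ 1`, `x² + p x + q > (|x| - 1) (|x| - q) ≥ 0`.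
      have h_abs : |z.re| < 1 := by
        rw [abs_lt]
        constructor <;> by_contra! <;> nlinarith
      simpa using h_abs
    · -- The other root is the conjugate of `z`, so `|z|² = q`.
      have : z.re ^ 2 + z.im ^ 2 = q := by linear_combination z.re * h_conj - h_re
      rwa [this]
  rw [← sq_lt_one_iff₀ (norm_nonneg z), ← Complex.normSq_eq_norm_sq, Complex.normSq_apply]
  simpa only [sq] using h_normSq

/-- The matrix `M_a` whose powers are studied, with entries in an arbitrary field. -/
def matrixM {K : Type*} [Field K] (a : K) : Matrix (Fin 4) (Fin 4) K :=
  !![0, 1, a / 2, a / 2;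
    -1, 0, a / 2, a / 2;
    0, 1, 0, 0;
    0, 0, 1, 0]

theorem charpoly_matrixM {K : Type*} [Field K] (a : K) :
    (matrixM a).charpoly = X ^ 4 + C (1 - a / 2) * X ^ 2 + C (a / 2) := by
  have h_charmatrix : (matrixM a).charmatrix =
      !![X, -1, -C (a / 2), -C (a / 2);
        1, X, -C (a / 2), -C (a / 2);
        0, -1, X, 0;
        0, 0, -1, X] := by
    ext i j : 1
    fin_cases i <;> fin_cases j <;> simp [matrixM, Matrix.charmatrix]
  have h_cofactor : (matrixM a).charmatrix.det =
      Matrix.det !![X, -1, -C (a / 2); 1, X, -C (a / 2); 0, -1, 0] +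
        X * Matrix.det !![X, -1, -C (a / 2); 1, X, -C (a / 2); 0, -1, X] := by
    rw [h_charmatrix, Matrix.det_succ_row _ 3]
    simp [Fin.sum_univ_four, Matrix.det_fin_three, Fin.succAbove, pow_succ]
  calc (matrixM a).charpoly
      = -(C (a / 2) * X) + C (a / 2) + X * (X * X * X - C (a / 2) * X + X + C (a / 2)) := by
        rw [Matrix.charpoly, h_cofactor]
        simp [Matrix.det_fin_three]
    _ = X ^ 4 + C (1 - a / 2) * X ^ 2 + C (a / 2) := by
        rw [C_sub, C_1]
        ring

theorem norm_lt_one_of_aeval_charpoly_matrixM {a : ℝ} (ha0 : 0 < a) (ha2 : a < 2) {z : ℂ}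
    (hz : aeval z (matrixM a).charpoly = 0) : ‖z‖ < 1 := by
  have h_quadratic : (z ^ 2) ^ 2 + (1 - a / 2 : ℝ) * z ^ 2 + (a / 2 : ℝ) = 0 := by
    simp only [charpoly_matrixM, map_add, map_mul, map_pow, aeval_X, aeval_C] at hz
    rw [← pow_mul]
    exact hz
  have h_sq : ‖z ^ 2‖ < 1 :=
    norm_lt_one_of_quadratic_eq_zero (abs_lt.2 ⟨by linarith, by linarith⟩) (by linarith)
      h_quadratic
  rwa [norm_pow, sq_lt_one_iff₀ (norm_nonneg z)] at h_sq

/-- For `0 < a < 2`, the powers of the matrix `M_a` decay geometrically: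
there are `C > 0` and `ρ ∈ (0,1)`, depending only on `a`, such that
`‖M_a^j v‖ ≤ C ρ^j ‖v‖` for every `j ∈ ℕ` and `v ∈ ℝ⁴` (Euclidean norm). -/
theorem Ma_powers_decay (a : ℝ) (ha0 : 0 < a) (ha2 : a < 2) :
    ∃ C > (0 : ℝ), ∃ ρ ∈ Set.Ioo (0 : ℝ) 1,
      ∀ (j : ℕ) (v : EuclideanSpace ℝ (Fin 4)),
        ‖(WithLp.equiv 2 (Fin 4 → ℝ)).symm
            ((((!![0, 1, a / 2, a / 2;
                -1, 0, a / 2, a / 2;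
                0, 1, 0, 0;
                0, 0, 1, 0] : Matrix (Fin 4) (Fin 4) ℝ) ^ j).mulVec
              ((WithLp.equiv 2 (Fin 4 → ℝ)) v)))‖ ≤ C * ρ ^ j * ‖v‖ :=
  exists_norm_pow_mulVec_le_of_forall_charpoly_root (M := matrixM a) fun _ hz =>
    norm_lt_one_of_aeval_charpoly_matrixM ha0 ha2 hz
end

section
/- Let ℓ > 0 and a ∈ (0, 2) be real numbers and let f, g : ℝ → ℝ be measurable and locally square-integrable functions such that for all y > 5ℓ/2 one has f(y) = g(y − ℓ) + (a/2)(g(y − 3ℓ) + g(y − 2ℓ)) and g(y) = −f(y − ℓ) + (a/2)(g(y − 3ℓ) + g(y − 2ℓ)). Define E(t) = ∫_{−ℓ/2}^{ℓ/2} (f(x + t)² + g(x + t)²) dx for t ≥ 0. Then there exist constants C₁ ≥ 0 and C₂ > 0, with C₂ depending only on ℓ and a, such that E(t) ≤ C₁ e^{−C₂ t} for all t ≥ 0. -/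
/-!
Eliminating either unknown from the two relations shows that, with `q = a / 2`, both `f` and `g`
satisfy `h (y + 4 * ℓ) = -(1 - q) • h (y + 2 * ℓ) - q • h y` for large `y`. The moduli of the
coefficients add up to `1`, so the larger of two consecutive values never grows; substituting the
recurrence into itself once, the two contributions to the coefficient `(1 - q) ^ 2 - q` have
opposite signs and partially cancel, so the larger value strictly shrinks over three steps.
A bound by a fixed factor over a fixed time shift is exponential decay, and it passes to integrals
over moving windows.
-/

open MeasureTheory

section TwoTermRecurrence

variable {a b : ℝ}

lemma abs_sq_add_add_abs_mul_lt_one (ha : a ≠ 0) (hb : b < 0) (hab : |a| + |b| ≤ 1) :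
    |a ^ 2 + b| + |a * b| < 1 := by
  have cancellation : |a ^ 2 + b| < a ^ 2 + |b| := by
    rw [abs_of_neg hb, abs_lt]
    constructor <;> linarith [sq_pos_of_ne_zero ha]
  calc |a ^ 2 + b| + |a * b| < a ^ 2 + |b| + |a * b| := by gcongr
    _ = |a| * (|a| + |b|) + |b| := by rw [abs_mul, ← sq_abs a]; ring
    _ ≤ |a| * 1 + |b| := by gcongr
    _ ≤ 1 := by linarith

variable (E : Type*) [SeminormedAddCommGroup E] [NormedSpace ℝ E]

lemma exists_norm_three_steps_le_exp_neg_mul (ha : a ≠ 0) (hb : b < 0) (hab : |a| + |b| ≤ 1) :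
    ∃ c > (0 : ℝ), ∀ w : ℕ → E, (∀ n, w (n + 2) = a • w (n + 1) + b • w n) →
      ‖(w 3, w 4)‖ ≤ Real.exp (-c) * ‖(w 0, w 1)‖ := by
  set σ := |a ^ 2 + b| + |a * b| with hσ
  have hσ1 : σ < 1 := abs_sq_add_add_abs_mul_lt_one ha hb hab
  have hσ0 : 0 ≤ σ := by positivity
  have ha0 : 0 < |a| := abs_pos.2 ha
  have hb0 : 0 < |b| := abs_pos.2 hb.ne
  set θ := 1 - |a| * (1 - σ) with hθ
  have hθ0 : 0 < θ := by nlinarith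
  have hθ1 : θ < 1 := by nlinarith
  refine ⟨-Real.log θ, neg_pos.2 (Real.log_neg hθ0 hθ1), fun w hw => ?_⟩
  rw [neg_neg, Real.exp_log hθ0]
  set m := ‖(w 0, w 1)‖
  have h0 : ‖w 0‖ ≤ m := norm_fst_le (w 0, w 1)
  have h1 : ‖w 1‖ ≤ m := norm_snd_le (w 0, w 1)
  have norm_comb_le (r s : ℝ) (x y : E) : ‖r • x + s • y‖ ≤ |r| * ‖x‖ + |s| * ‖y‖ := by
    simpa only [norm_smul, Real.norm_eq_abs] using norm_add_le (r • x) (s • y)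
  have h2 : ‖w 2‖ ≤ m :=
    calc ‖w 2‖ ≤ |a| * ‖w 1‖ + |b| * ‖w 0‖ := hw 0 ▸ norm_comb_le ..
      _ ≤ |a| * m + |b| * m := by gcongr
      _ ≤ m := by nlinarith [norm_nonneg (w 0)]
  have h3 : ‖w 3‖ ≤ σ * m :=
    calc ‖w 3‖ = ‖(a ^ 2 + b) • w 1 + (a * b) • w 0‖ := by
          rw [show w 3 = a • w 2 + b • w 1 from hw 1, show w 2 = a • w 1 + b • w 0 from hw 0]
          congr 1
          module
      _ ≤ |a ^ 2 + b| * ‖w 1‖ + |a * b| * ‖w 0‖ := norm_comb_le ..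
      _ ≤ |a ^ 2 + b| * m + |a * b| * m := by gcongr
      _ = σ * m := by rw [hσ]; ring
  have h4 : ‖w 4‖ ≤ θ * m :=
    calc ‖w 4‖ ≤ |a| * ‖w 3‖ + |b| * ‖w 2‖ := hw 2 ▸ norm_comb_le ..
      _ ≤ |a| * (σ * m) + |b| * m := by gcongr
      _ ≤ |a| * (σ * m) + (1 - |a|) * m := by gcongr; linarith
      _ = θ * m := by rw [hθ]; ring
  have hσθ : σ ≤ θ := by nlinarith
  exact max_le (h3.trans (by gcongr)) h4

end TwoTermRecurrence

lemma le_of_add_le_of_forall_mem_Icc_le {β : Type*} [Preorder β] {G : ℝ → β} {T s t₀ : ℝ} {M : β}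
    (hT : 0 < T) (hstep : ∀ t ≥ t₀, G (t + T) ≤ G t) (hM : ∀ t ∈ Set.Icc s (t₀ + T), G t ≤ M)
    (hs : s ≤ t₀) {t : ℝ} (ht : s ≤ t) : G t ≤ M := by
  have bound (n : ℕ) : ∀ t ∈ Set.Icc s (t₀ + T + n * T), G t ≤ M := by
    induction n with
    | zero => simpa using hM
    | succ n ih =>
      rintro t ⟨hst, htn⟩
      push_cast at htn
      rcases le_total t (t₀ + T) with htT | htT
      · exact hM t ⟨hst, htT⟩
      · have := hstep (t - T) (by linarith)
        rw [sub_add_cancel] at this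
        exact this.trans (ih _ ⟨by linarith, by linarith⟩)
  obtain ⟨n, hn⟩ := exists_nat_ge ((t - (t₀ + T)) / T)
  exact bound n t ⟨ht, by linarith [(div_le_iff₀ hT).1 hn]⟩

lemma exists_forall_le_mul_exp_of_add_le {F : ℝ → ℝ} {T c s t₀ M : ℝ} (hT : 0 < T) (hc : 0 ≤ c)
    (hstep : ∀ t ≥ t₀, F (t + T) ≤ Real.exp (-(c * T)) * F t)
    (hM : ∀ t ∈ Set.Icc s (t₀ + T), F t ≤ M) (hs : s ≤ t₀) :
    ∃ C ≥ (0 : ℝ), ∀ t ≥ s, F t ≤ C * Real.exp (-c * t) := by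
  set G : ℝ → ℝ := fun t => F t * Real.exp (c * t) with hG
  have hGstep (t : ℝ) (ht : t ≥ t₀) : G (t + T) ≤ G t :=
    calc F (t + T) * Real.exp (c * (t + T))
        ≤ Real.exp (-(c * T)) * F t * Real.exp (c * (t + T)) := by gcongr; exact hstep t ht
      _ = F t * (Real.exp (-(c * T)) * Real.exp (c * (t + T))) := by ring
      _ = F t * Real.exp (c * t) := by rw [← Real.exp_add]; ring_nf
  have hGM (t : ℝ) (ht : t ∈ Set.Icc s (t₀ + T)) : G t ≤ |M| * Real.exp (c * (t₀ + T)) := by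
    have := (hM t ht).trans (le_abs_self M)
    have := ht.2
    simp only [hG]
    gcongr
  refine ⟨|M| * Real.exp (c * (t₀ + T)), by positivity, fun t ht => ?_⟩
  rw [neg_mul, Real.exp_neg, ← div_eq_mul_inv, le_div_iff₀ (Real.exp_pos _)]
  exact le_of_add_le_of_forall_mem_Icc_le hT hGstep hGM hs ht

lemma locallyIntegrable_sup {X β : Type*} [TopologicalSpace X] [MeasurableSpace X] {μ : Measure X}
    [NormedAddCommGroup β] [Lattice β] [HasSolidNorm β] [IsOrderedAddMonoid β] {φ ψ : X → β}
    (hφ : LocallyIntegrable φ μ) (hψ : LocallyIntegrable ψ μ) : LocallyIntegrable (φ ⊔ ψ) μ := by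
  intro x
  obtain ⟨s, hs, hφs⟩ := hφ x
  obtain ⟨t, ht, hψt⟩ := hψ x
  exact ⟨s ∩ t, Filter.inter_mem hs ht, Integrable.sup (hφs.mono_set Set.inter_subset_left)
    (hψt.mono_set Set.inter_subset_right)⟩

lemma locallyIntegrable_comp_add_right {G F : Type*} [TopologicalSpace G] [AddGroup G]
    [ContinuousAdd G] [MeasurableSpace G] [BorelSpace G] {μ : Measure G} [μ.IsAddRightInvariant]
    [NormedAddCommGroup F] {φ : G → F} (hφ : LocallyIntegrable φ μ) (d : G) :
    LocallyIntegrable (fun x => φ (x + d)) μ :=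
  (locallyIntegrable_map_homeomorph (Homeomorph.addRight d)).1 <| by
    simpa only [Homeomorph.coe_addRight, map_add_right_eq_self] using hφ

lemma intervalIntegrable_of_locallyIntegrable {F : Type*} [NormedAddCommGroup F] {φ : ℝ → F}
    {μ : Measure ℝ} (hφ : LocallyIntegrable φ μ) (u v : ℝ) : IntervalIntegrable φ μ u v :=
  (hφ.integrableOn_isCompact isCompact_uIcc).intervalIntegrable

lemma intervalIntegrable_comp_add_right_of_locallyIntegrable {F : Type*} [NormedAddCommGroup F]
    {φ : ℝ → F} (hφ : LocallyIntegrable φ volume) (d u v : ℝ) :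
    IntervalIntegrable (fun x => φ (x + d)) volume u v :=
  intervalIntegrable_of_locallyIntegrable (locallyIntegrable_comp_add_right hφ d) u v

lemma exists_window_integral_le_mul_exp {φ : ℝ → ℝ} {T c y₀ u v : ℝ} (hT : 0 < T) (hc : 0 ≤ c)
    (hφ0 : 0 ≤ φ) (hφ : LocallyIntegrable φ volume)
    (hstep : ∀ y > y₀, φ (y + T) ≤ Real.exp (-(c * T)) * φ y) (huv : u ≤ v) :
    ∃ C ≥ (0 : ℝ), ∀ t ≥ 0, (∫ x in u..v, φ (x + t)) ≤ C * Real.exp (-c * t) := by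
  have hφ_int (t : ℝ) : IntervalIntegrable (fun x => φ (x + t)) volume u v :=
    intervalIntegrable_comp_add_right_of_locallyIntegrable hφ t u v
  set t₀ := max 0 (y₀ - u)
  have ht₀ : 0 ≤ t₀ := le_max_left _ _
  have hut₀ : y₀ - u ≤ t₀ := le_max_right _ _
  refine exists_forall_le_mul_exp_of_add_le (M := ∫ y in u..(v + (t₀ + T)), φ y) hT hc
    (fun t ht => ?_) (fun t ht => ?_) ht₀
  · rw [← intervalIntegral.integral_const_mul]
    refine intervalIntegral.integral_mono_on_of_le_Ioo huv (hφ_int _) ((hφ_int t).const_mul _)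
      fun x hx => ?_
    rw [← add_assoc]
    exact hstep _ (by linarith [hx.1])
  · rw [intervalIntegral.integral_comp_add_right]
    exact intervalIntegral.integral_mono_interval (by linarith [ht.1]) (by linarith)
      (by linarith [ht.2]) (ae_of_all _ hφ0) (intervalIntegrable_of_locallyIntegrable hφ _ _)

section DelayRecurrence

variable (E : Type*) [SeminormedAddCommGroup E] [NormedSpace ℝ E] {a b δ : ℝ}

lemma exists_norm_add_three_mul_le_exp_neg_mul (ha : a ≠ 0) (hb : b < 0) (hab : |a| + |b| ≤ 1)
    (hδ : 0 ≤ δ) :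
    ∃ c > (0 : ℝ), ∀ (h : ℝ → E) (y₀ : ℝ),
      (∀ y > y₀, h (y + 2 * δ) = a • h (y + δ) + b • h y) →
      ∀ y > y₀, ‖(h (y + 3 * δ), h (y + 3 * δ + δ))‖ ≤ Real.exp (-c) * ‖(h y, h (y + δ))‖ := by
  obtain ⟨c, hc, hcontr⟩ := exists_norm_three_steps_le_exp_neg_mul E ha hb hab
  refine ⟨c, hc, fun h y₀ hrec y hy => ?_⟩
  have hw (n : ℕ) :
      h (y + (n + 2 : ℕ) * δ) = a • h (y + (n + 1 : ℕ) * δ) + b • h (y + n * δ) := by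
    have hyn : y + n * δ > y₀ := lt_add_of_lt_of_nonneg hy (by positivity)
    simpa [add_mul, ← add_assoc] using hrec (y + n * δ) hyn
  simpa [show y + 3 * δ + δ = y + 4 * δ by ring] using hcontr (fun n => h (y + n * δ)) hw

theorem exists_window_integral_norm_rpow_le_mul_exp {p : ℝ} (ha : a ≠ 0) (hb : b < 0)
    (hab : |a| + |b| ≤ 1) (hδ : 0 < δ) (hp : 0 < p) :
    ∃ c > (0 : ℝ), ∀ (h : ℝ → E) (y₀ u v : ℝ), LocallyIntegrable (fun y => ‖h y‖ ^ p) volume →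
      (∀ y > y₀, h (y + 2 * δ) = a • h (y + δ) + b • h y) → u ≤ v →
      ∃ C ≥ (0 : ℝ), ∀ t ≥ 0, (∫ x in u..v, ‖h (x + t)‖ ^ p) ≤ C * Real.exp (-c * t) := by
  obtain ⟨c, hc, hcontr⟩ := exists_norm_add_three_mul_le_exp_neg_mul E ha hb hab hδ.le
  refine ⟨c * p / (3 * δ), by positivity, fun h y₀ u v hh hrec huv => ?_⟩
  set φ : ℝ → ℝ := fun y => ‖(h y, h (y + δ))‖ ^ p
  have hφ : LocallyIntegrable φ volume :=
    (locallyIntegrable_sup hh (locallyIntegrable_comp_add_right hh δ)).congr <| ae_of_all _ fun _ =>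
      (Real.rpow_max (norm_nonneg _) (norm_nonneg _) hp.le).symm
  have hstep (y : ℝ) (hy : y > y₀) :
      φ (y + 3 * δ) ≤ Real.exp (-(c * p / (3 * δ) * (3 * δ))) * φ y :=
    calc φ (y + 3 * δ) ≤ (Real.exp (-c) * ‖(h y, h (y + δ))‖) ^ p :=
          Real.rpow_le_rpow (norm_nonneg _) (hcontr h y₀ hrec y hy) hp.le
      _ = Real.exp (-c) ^ p * φ y := Real.mul_rpow (Real.exp_pos _).le (norm_nonneg _)
      _ = Real.exp (-(c * p / (3 * δ) * (3 * δ))) * φ y := by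
          rw [← Real.exp_mul, neg_mul, div_mul_cancel₀ _ (by positivity)]
  obtain ⟨C, hC, hdecay⟩ := exists_window_integral_le_mul_exp (by positivity) (by positivity)
    (fun y => by positivity) hφ hstep huv
  refine ⟨C, hC, fun t ht => le_trans ?_ (hdecay t ht)⟩
  exact intervalIntegral.integral_mono_on huv
    (intervalIntegrable_comp_add_right_of_locallyIntegrable hh t u v)
    (intervalIntegrable_comp_add_right_of_locallyIntegrable hφ t u v)
    fun x _ => Real.rpow_le_rpow (norm_nonneg _) (norm_fst_le (h (x + t), h (x + t + δ))) hp.le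

end DelayRecurrence

section Elimination

variable {R E : Type*} [CommRing R] [AddCommGroup E] [Module R E] {ℓ y₀ : ℝ} {q : R} {f g : ℝ → E}

lemma recurrence_snd_of_reflection_transmission (hℓ : 0 ≤ ℓ)
    (hf : ∀ y > y₀, f y = g (y - ℓ) + q • (g (y - 3 * ℓ) + g (y - 2 * ℓ)))
    (hg : ∀ y > y₀, g y = -f (y - ℓ) + q • (g (y - 3 * ℓ) + g (y - 2 * ℓ)))
    {y : ℝ} (hy : y > y₀) :
    g (y + 2 * (2 * ℓ)) = -(1 - q) • g (y + 2 * ℓ) + -q • g y := by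
  calc g (y + 2 * (2 * ℓ)) = -f (y + 3 * ℓ) + q • (g (y + ℓ) + g (y + 2 * ℓ)) := by
        convert hg (y + 2 * (2 * ℓ)) (by linarith) using 5 <;> ring
    _ = -(g (y + 2 * ℓ) + q • (g y + g (y + ℓ))) + q • (g (y + ℓ) + g (y + 2 * ℓ)) := by
        congr 2
        convert hf (y + 3 * ℓ) (by linarith) using 4 <;> ring_nf
    _ = -(1 - q) • g (y + 2 * ℓ) + -q • g y := by module

lemma recurrence_fst_of_reflection_transmission (hℓ : 0 ≤ ℓ)
    (hf : ∀ y > y₀, f y = g (y - ℓ) + q • (g (y - 3 * ℓ) + g (y - 2 * ℓ)))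
    (hg : ∀ y > y₀, g y = -f (y - ℓ) + q • (g (y - 3 * ℓ) + g (y - 2 * ℓ)))
    {y : ℝ} (hy : y > y₀ + 3 * ℓ) :
    f (y + 2 * (2 * ℓ)) = -(1 - q) • f (y + 2 * ℓ) + -q • f y := by
  -- `f` is a combination of shifts of `g`, and the recurrence is linear and shift-invariant
  have hgrec (k : ℝ) (hk : k ≤ 3) := recurrence_snd_of_reflection_transmission hℓ hf hg
    (y := y - k * ℓ) (by nlinarith)
  have h1 := hgrec 1 (by norm_num)
  have h2 := hgrec 2 (by norm_num)
  have h3 := hgrec 3 (by norm_num)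
  have hf0 := hf y (by linarith)
  have hf2 := hf (y + 2 * ℓ) (by linarith)
  have hf4 := hf (y + 4 * ℓ) (by linarith)
  ring_nf at h1 h2 h3 hf0 hf2 hf4 ⊢
  linear_combination (norm := module) hf4 + (1 - q) • hf2 + q • hf0 + h1 + q • (h2 + h3)

end Elimination

theorem energy_decay_pointwise_delay_general (E : Type*) [SeminormedAddCommGroup E]
    [NormedSpace ℝ E] {ℓ a p : ℝ} (hℓ : 0 < ℓ) (ha0 : 0 < a) (ha2 : a < 2) (hp : 0 < p) :
    ∃ C₂ > (0 : ℝ), ∀ (f g : ℝ → E) (y₀ u v : ℝ),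
      LocallyIntegrable (fun s => ‖f s‖ ^ p) volume →
      LocallyIntegrable (fun s => ‖g s‖ ^ p) volume →
      (∀ y > y₀, f y = g (y - ℓ) + (a / 2) • (g (y - 3 * ℓ) + g (y - 2 * ℓ))) →
      (∀ y > y₀, g y = -f (y - ℓ) + (a / 2) • (g (y - 3 * ℓ) + g (y - 2 * ℓ))) →
      u ≤ v → ∃ C₁ ≥ (0 : ℝ), ∀ t ≥ 0,
        (∫ x in u..v, (‖f (x + t)‖ ^ p + ‖g (x + t)‖ ^ p)) ≤ C₁ * Real.exp (-C₂ * t) := by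
  have hcoeff : |-(1 - a / 2)| + |-(a / 2)| ≤ 1 := by
    rw [abs_neg, abs_neg, abs_of_pos (by linarith), abs_of_pos (by linarith)]
    linarith
  obtain ⟨c, hc, hdecay⟩ := exists_window_integral_norm_rpow_le_mul_exp E (δ := 2 * ℓ) (p := p)
    (by linarith : -(1 - a / 2) ≠ 0) (by linarith) hcoeff (by positivity) hp
  refine ⟨c, hc, fun f g y₀ u v hfp hgp hf hg huv => ?_⟩
  obtain ⟨Cf, hCf, hfdecay⟩ := hdecay f (y₀ + 3 * ℓ) u v hfp
    (fun _ => recurrence_fst_of_reflection_transmission hℓ.le hf hg) huv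
  obtain ⟨Cg, hCg, hgdecay⟩ := hdecay g y₀ u v hgp
    (fun _ => recurrence_snd_of_reflection_transmission hℓ.le hf hg) huv
  refine ⟨Cf + Cg, by positivity, fun t ht => ?_⟩
  rw [intervalIntegral.integral_add
    (intervalIntegrable_comp_add_right_of_locallyIntegrable hfp t u v)
    (intervalIntegrable_comp_add_right_of_locallyIntegrable hgp t u v), add_mul]
  exact add_le_add (hfdecay t ht) (hgdecay t ht)

/-- Exponential decay of the energy for the pointwise delayed damping at `ξ = ℓ/2`:
if `f, g` are measurable, locally square-integrable and satisfy the
reflection/transmission relations for `y > 5ℓ/2`, then the energy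
`E(t) = ∫_{-ℓ/2}^{ℓ/2} (f(x+t)² + g(x+t)²) dx` decays exponentially, with rate
`C₂` depending only on `ℓ` and `a`. -/
theorem energy_decay_pointwise_delay (ℓ a : ℝ) (hℓ : 0 < ℓ) (ha0 : 0 < a) (ha2 : a < 2) :
    ∃ C₂ > (0 : ℝ), ∀ f g : ℝ → ℝ,
      Measurable f → Measurable g →
      LocallyIntegrable (fun s => f s ^ 2) volume →
      LocallyIntegrable (fun s => g s ^ 2) volume →
      (∀ y, 5 * ℓ / 2 < y →
        f y = g (y - ℓ) + a / 2 * (g (y - 3 * ℓ) + g (y - 2 * ℓ))) →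
      (∀ y, 5 * ℓ / 2 < y →
        g y = -f (y - ℓ) + a / 2 * (g (y - 3 * ℓ) + g (y - 2 * ℓ))) →
      ∃ C₁ ≥ (0 : ℝ), ∀ t : ℝ, 0 ≤ t →
        (∫ x in (-(ℓ / 2))..(ℓ / 2), (f (x + t) ^ 2 + g (x + t) ^ 2)) ≤
          C₁ * Real.exp (-C₂ * t) := by
  obtain ⟨C₂, hC₂, decay⟩ := energy_decay_pointwise_delay_general ℝ hℓ ha0 ha2 two_pos
  refine ⟨C₂, hC₂, fun f g _ _ hf2 hg2 hf hg => ?_⟩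
  simpa using decay f g (5 * ℓ / 2) (-(ℓ / 2)) (ℓ / 2) (by simpa using hf2) (by simpa using hg2)
    hf hg (by linarith)
end

section
/- Let ℓ > 0 and let α₋, α₊ : ℝ → ℝ be continuously differentiable. Define u(x, t) = α₋(x + t) − α₋(t − x) for x ∈ (0, ℓ/2) and u(x, t) = α₊(x − ℓ + t) + α₊(t − x + ℓ) for x ∈ (ℓ/2, ℓ). Then for every t ∈ ℝ, (1/2)∫₀^ℓ ( (∂u/∂x (x, t))² + (∂u/∂t (x, t))² ) dx = ∫_{t−ℓ/2}^{t+ℓ/2} ( α₋′(s)² + α₊′(s)² ) ds. -/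
/-!
A D'Alembert wave `F (x + t) + G (t - x)` has `u_x = p - q` and `u_t = p + q` with `p = F' (x + t)`
and `q = G' (t - x)`, so the parallelogram law turns its energy density into `p² + q²`. Each piece
of the string, measured from its own endpoint, is a wave `α (x + t) + ε α (t - x)` reflected with
`ε = ±1`: the translation in `p` and the reflection in `q` then map `(0, b)` onto the two halves
of `(t - b, t + b)`, and the piece carries the integral of `α'²` over that interval.
-/

open MeasureTheory Set

/-- The energy density `(u_x² + u_t²) / 2` of the one-dimensional wave equation at position `x` and
time `t`, for a displacement `u` taking the position as its first argument. It is meaningful only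
where both partial derivatives exist, `deriv` being `0` elsewhere. -/
noncomputable def waveEnergyDensity (u : ℝ → ℝ → ℝ) (x t : ℝ) : ℝ :=
  1 / 2 * (deriv (fun y => u y t) x ^ 2 + deriv (fun s => u x s) t ^ 2)

lemma waveEnergyDensity_comp_const_sub (u : ℝ → ℝ → ℝ) (a x t : ℝ) :
    waveEnergyDensity (fun y => u (a - y)) x t = waveEnergyDensity u (a - x) t := by
  simp only [waveEnergyDensity, deriv_comp_const_sub (fun y => u y t), neg_sq]

lemma integral_waveEnergyDensity_comp_const_sub (u : ℝ → ℝ → ℝ) (a b c t : ℝ) :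
    ∫ x in b..c, waveEnergyDensity (fun y => u (a - y)) x t =
      ∫ x in (a - c)..(a - b), waveEnergyDensity u x t := by
  simp only [waveEnergyDensity_comp_const_sub,
    intervalIntegral.integral_comp_sub_left (fun x => waveEnergyDensity u x t)]

lemma waveEnergyDensity_dAlembert {F G : ℝ → ℝ} {x t : ℝ}
    (hF : DifferentiableAt ℝ F (x + t)) (hG : DifferentiableAt ℝ G (t - x)) :
    waveEnergyDensity (fun y s => F (y + s) + G (s - y)) x t =
      deriv F (x + t) ^ 2 + deriv G (t - x) ^ 2 := by
  have u_x : deriv (fun y => F (y + t) + G (t - y)) x = deriv F (x + t) + -deriv G (t - x) :=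
    ((hF.hasDerivAt.comp_add_const x t).add (hG.hasDerivAt.comp_const_sub t x)).deriv
  have u_t : deriv (fun s => F (x + s) + G (s - x)) t = deriv F (x + t) + deriv G (t - x) :=
    ((hF.hasDerivAt.comp_const_add x t).add (hG.hasDerivAt.comp_sub_const t x)).deriv
  rw [waveEnergyDensity, u_x, u_t]
  ring

lemma integral_waveEnergyDensity_dAlembert {F G : ℝ → ℝ} {a b t : ℝ}
    (hF : ∀ᵐ s, DifferentiableAt ℝ F s) (hG : ∀ᵐ s, DifferentiableAt ℝ G s)
    (hF' : IntervalIntegrable (fun s => deriv F s ^ 2) volume (a + t) (b + t))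
    (hG' : IntervalIntegrable (fun s => deriv G s ^ 2) volume (t - b) (t - a)) :
    ∫ x in a..b, waveEnergyDensity (fun y s => F (y + s) + G (s - y)) x t =
      (∫ s in (a + t)..(b + t), deriv F s ^ 2) + ∫ s in (t - b)..(t - a), deriv G s ^ 2 := by
  have density : ∀ᵐ x, waveEnergyDensity (fun y s => F (y + s) + G (s - y)) x t =
      deriv F (x + t) ^ 2 + deriv G (t - x) ^ 2 := by
    filter_upwards [(quasiMeasurePreserving_add_right volume t).ae hF,
      (quasiMeasurePreserving_sub_left volume t).ae hG] with x hFx hGx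
    exact waveEnergyDensity_dAlembert hFx hGx
  have left_integrable : IntervalIntegrable (fun x => deriv F (x + t) ^ 2) volume a b := by
    simpa using hF'.comp_add_right t
  have right_integrable : IntervalIntegrable (fun x => deriv G (t - x) ^ 2) volume a b := by
    simpa using (hG'.comp_sub_left t).symm
  rw [intervalIntegral.integral_congr_ae (density.mono fun _ h _ => h),
    intervalIntegral.integral_add left_integrable right_integrable,
    intervalIntegral.integral_comp_add_right (fun s => deriv F s ^ 2),
    intervalIntegral.integral_comp_sub_left (fun s => deriv G s ^ 2)]

lemma integral_waveEnergyDensity_reflected {α : ℝ → ℝ} {ε b t : ℝ} (hε : ε ^ 2 = 1)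
    (hα : ∀ᵐ s, DifferentiableAt ℝ α s)
    (hα' : IntervalIntegrable (fun s => deriv α s ^ 2) volume (t - b) (t + b)) :
    ∫ x in 0..b, waveEnergyDensity (fun y s => α (y + s) + ε * α (s - y)) x t =
      ∫ s in (t - b)..(t + b), deriv α s ^ 2 := by
  have deriv_sq (s : ℝ) : deriv (fun r => ε * α r) s ^ 2 = deriv α s ^ 2 := by
    rw [deriv_const_mul_field, mul_pow, hε, one_mul]
  have t_mem : t ∈ uIcc (t - b) (t + b) := by
    rcases le_total 0 b with hb | hb <;> simp [mem_uIcc, hb]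
  have before : IntervalIntegrable (fun s => deriv α s ^ 2) volume (t - b) t :=
    hα'.mono_set (uIcc_subset_uIcc_left t_mem)
  have after : IntervalIntegrable (fun s => deriv α s ^ 2) volume t (t + b) :=
    hα'.mono_set (uIcc_subset_uIcc_right t_mem)
  rw [integral_waveEnergyDensity_dAlembert (G := fun r => ε * α r) hα
    (hα.mono fun _ h => h.const_mul ε)
    (by simpa only [zero_add, add_comm b] using after)
    (by simpa only [deriv_sq, sub_zero] using before)]
  simp only [deriv_sq, zero_add, sub_zero, add_comm b]
  rw [add_comm, intervalIntegral.integral_add_adjacent_intervals before after]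

theorem dAlembert_energy_piecewise_general {ξ ℓ t : ℝ} {αm αp : ℝ → ℝ}
    (hαm : ∀ᵐ s, DifferentiableAt ℝ αm s) (hαp : ∀ᵐ s, DifferentiableAt ℝ αp s)
    (hαm' : IntervalIntegrable (fun s => deriv αm s ^ 2) volume (t - ξ) (t + ξ))
    (hαp' : IntervalIntegrable (fun s => deriv αp s ^ 2) volume (t - (ℓ - ξ)) (t + (ℓ - ξ))) :
    (∫ x in 0..ξ, waveEnergyDensity (fun y s => αm (y + s) - αm (s - y)) x t) +
        (∫ x in ξ..ℓ, waveEnergyDensity (fun y s => αp (y - ℓ + s) + αp (s - y + ℓ)) x t) =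
      (∫ s in (t - ξ)..(t + ξ), deriv αm s ^ 2) +
        ∫ s in (t - (ℓ - ξ))..(t + (ℓ - ξ)), deriv αp s ^ 2 := by
  have left_wave : (fun y s => αm (y + s) - αm (s - y)) =
      fun y s => αm (y + s) + (-1) * αm (s - y) := by
    simp only [neg_one_mul, sub_eq_add_neg]
  have right_wave : (fun y s => αp (y - ℓ + s) + αp (s - y + ℓ)) =
      fun y => (fun z s => αp (z + s) + 1 * αp (s - z)) (ℓ - y) := by
    ext y s
    ring_nf
  rw [left_wave, right_wave,
    integral_waveEnergyDensity_comp_const_sub (fun z s => αp (z + s) + 1 * αp (s - z)), sub_self,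
    integral_waveEnergyDensity_reflected neg_one_sq hαm hαm',
    integral_waveEnergyDensity_reflected (one_pow 2) hαp hαp']

/-- Energy identity for the piecewise D'Alembert form with interface at `ξ = ℓ/2`:
with `u = α₋(x+t) - α₋(t-x)` on `(0, ℓ/2)` and `u = α₊(x-ℓ+t) + α₊(t-x+ℓ)` on
`(ℓ/2, ℓ)`, one has
`(1/2)∫₀^ℓ (u_x² + u_t²) dx = ∫_{t-ℓ/2}^{t+ℓ/2} (α₋'(s)² + α₊'(s)²) ds`,
the integral over `(0,ℓ)` being the sum of the integrals over the two pieces. -/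
theorem dAlembert_energy_piecewise (ℓ : ℝ) (hℓ : 0 < ℓ) (αm αp : ℝ → ℝ)
    (hαm : ContDiff ℝ 1 αm) (hαp : ContDiff ℝ 1 αp) :
    ∀ t : ℝ,
      (1 / 2) * ((∫ x in (0 : ℝ)..(ℓ / 2),
            ((deriv (fun y => αm (y + t) - αm (t - y)) x) ^ 2 +
              (deriv (fun s => αm (x + s) - αm (s - x)) t) ^ 2)) +
          (∫ x in (ℓ / 2)..ℓ,
            ((deriv (fun y => αp (y - ℓ + t) + αp (t - y + ℓ)) x) ^ 2 +
              (deriv (fun s => αp (x - ℓ + s) + αp (s - x + ℓ)) t) ^ 2))) =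
        ∫ s in (t - ℓ / 2)..(t + ℓ / 2), ((deriv αm s) ^ 2 + (deriv αp s) ^ 2) := by
  intro t
  have differentiable_ae {α : ℝ → ℝ} (hα : ContDiff ℝ 1 α) : ∀ᵐ s, DifferentiableAt ℝ α s :=
    .of_forall (hα.differentiable one_ne_zero)
  have integrable {α : ℝ → ℝ} (hα : ContDiff ℝ 1 α) (a b : ℝ) :
      IntervalIntegrable (fun s => deriv α s ^ 2) volume a b :=
    ((hα.continuous_deriv le_rfl).pow 2).intervalIntegrable a b
  have energy := dAlembert_energy_piecewise_general (ξ := ℓ / 2) (ℓ := ℓ) (t := t)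
    (differentiable_ae hαm) (differentiable_ae hαp) (integrable hαm _ _) (integrable hαp _ _)
  rw [sub_half] at energy
  rw [intervalIntegral.integral_add (integrable hαm _ _) (integrable hαp _ _), ← energy, mul_add,
    ← intervalIntegral.integral_const_mul, ← intervalIntegral.integral_const_mul]
  simp only [waveEnergyDensity]
end

section
/- Let μ₁ ≠ 1 and μ₂ be real numbers and set κ = (1 + μ₁)/(μ₁ − 1). Then |κ(μ₂ − 1) − μ₂| < 1 if and only if either 1 < μ₂ < μ₁ or μ₁ < μ₂ < 1. -/
/-! The eigenvalue is `2 * t - 1` with `t = (μ₂ - 1) / (μ₁ - 1)`. It has modulus less than one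
exactly when `0 < t < 1`, and `t` is the affine coordinate of `μ₂` for which `1` is the origin
and `μ₁` the unit point, so this means that `μ₂` lies strictly between `1` and `μ₁`. -/

theorem abs_two_mul_sub_one_lt_one_iff {R : Type*} [Ring R] [LinearOrder R]
    [IsStrictOrderedRing R] {t : R} : |2 * t - 1| < 1 ↔ 0 < t ∧ t < 1 := by
  rw [abs_lt, lt_sub_iff_add_lt, neg_add_cancel, sub_lt_iff_lt_add, one_add_one_eq_two,
    mul_pos_iff_of_pos_left two_pos, mul_lt_iff_lt_one_right two_pos]

theorem one_add_div_sub_one_mul_sub_one_sub {K : Type*} [Field K] {a : K} (ha : a ≠ 1) (b : K) :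
    (1 + a) / (a - 1) * (b - 1) - b = 2 * ((b - 1) / (a - 1)) - 1 := by
  have hsub : a - 1 ≠ 0 := sub_ne_zero.mpr ha
  field_simp
  ring

section LinearOrderedField

variable {K : Type*} [Field K] [LinearOrder K] [IsStrictOrderedRing K]

theorem sub_div_sub_pos_and_lt_one_iff {a b x : K} :
    0 < (x - a) / (b - a) ∧ (x - a) / (b - a) < 1 ↔ (a < x ∧ x < b) ∨ (b < x ∧ x < a) := by
  rcases lt_trichotomy a b with hab | rfl | hba
  · have hnot : ¬(b < x ∧ x < a) := fun h ↦ lt_asymm hab (h.1.trans h.2)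
    rw [div_pos_iff_of_pos_right (sub_pos.mpr hab), div_lt_one (sub_pos.mpr hab), sub_pos,
      sub_lt_sub_iff_right, or_iff_left hnot]
  · -- Neither side holds: the quotient by `a - a` is `0`.
    have hnot : ¬(a < x ∧ x < a) := fun h ↦ lt_asymm h.1 h.2
    simp only [sub_self, div_zero, lt_irrefl, false_and, hnot, or_self]
  · have hnot : ¬(a < x ∧ x < b) := fun h ↦ lt_asymm hba (h.1.trans h.2)
    have hneg : b - a < 0 := sub_neg.mpr hba
    rw [lt_div_iff_of_neg hneg, zero_mul, div_lt_one_of_neg hneg, sub_neg, sub_lt_sub_iff_right,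
      or_iff_right hnot, and_comm]

theorem eigenvalue_condition_iff_general {μ₁ : K} (hμ₁ : μ₁ ≠ 1) (μ₂ : K) :
    |(1 + μ₁) / (μ₁ - 1) * (μ₂ - 1) - μ₂| < 1 ↔
      (1 < μ₂ ∧ μ₂ < μ₁) ∨ (μ₁ < μ₂ ∧ μ₂ < 1) := by
  rw [one_add_div_sub_one_mul_sub_one_sub hμ₁, abs_two_mul_sub_one_lt_one_iff,
    sub_div_sub_pos_and_lt_one_iff]

end LinearOrderedField

/-- With `κ = (1+μ₁)/(μ₁-1)` (for `μ₁ ≠ 1`), one has `|κ(μ₂-1) - μ₂| < 1` if and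
only if `1 < μ₂ < μ₁` or `μ₁ < μ₂ < 1`. -/
theorem eigenvalue_condition_iff (μ₁ μ₂ : ℝ) (hμ₁ : μ₁ ≠ 1) :
    |(1 + μ₁) / (μ₁ - 1) * (μ₂ - 1) - μ₂| < 1 ↔
      (1 < μ₂ ∧ μ₂ < μ₁) ∨ (μ₁ < μ₂ ∧ μ₂ < 1) :=
  eigenvalue_condition_iff_general hμ₁ μ₂
end

section
/- Let ℓ > 0, let μ₁ ≠ 1 and μ₂ be real numbers satisfying either 1 < μ₂ < μ₁ or μ₁ < μ₂ < 1, and set κ = (1 + μ₁)/(μ₁ − 1). Let h : ℝ → ℝ be measurable and locally square-integrable, and suppose that for every natural number i: h(y) = κ h(y − 2ℓ) for all y ∈ ((4i+3)ℓ, (4i+5)ℓ), and h(y) = (μ₂ − 1) h(y − 2ℓ) − μ₂ h(y − 4ℓ) for all y ∈ ((4i+5)ℓ, (4i+7)ℓ). Define E(t) = ∫_{t−ℓ}^{t+ℓ} h(s)² ds. Then there exist constants C₁ ≥ 0 and C₂ > 0, with C₂ depending only on ℓ, μ₁ and μ₂, such that E(t) ≤ C₁ e^{−C₂ t} for all t ≥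 0. -/
open MeasureTheory

/-!
Over one full switching period `4ℓ` the two recurrences compose to `h (s + 4ℓ) = r h s` for almost
every `s > ℓ`, where `r = (μ₂ - 1) κ - μ₂ = 2 (μ₂ - 1) / (μ₁ - 1) - 1`. The condition on `μ₁` and
`μ₂` says exactly that `0 < (μ₂ - 1) / (μ₁ - 1) < 1`, that is, `|r| < 1`. Hence
`E (t + 4ℓ) = r² E t` for `t ≥ 2ℓ`, and since `r² = 1 - 4ℓ c ≤ exp (-4ℓ c)` for
`c = (1 - r²) / (4ℓ)`, the function `exp (c t) E t` does not increase over a period, so it stays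
below its bound on `[0, 6ℓ]`.
-/

lemma le_of_forall_add_le {β : Type*} [Preorder β] {G : ℝ → β} {t₀ a p : ℝ} {B : β}
    (ha : t₀ ≤ a) (hp : 0 < p) (hbase : ∀ t ∈ Set.Icc t₀ (a + p), G t ≤ B)
    (hstep : ∀ t, a ≤ t → G (t + p) ≤ G t) {t : ℝ} (ht : t₀ ≤ t) : G t ≤ B := by
  have le_upto (n : ℕ) : ∀ t, t₀ ≤ t → t ≤ a + p + n * p → G t ≤ B := by
    induction n with
    | zero => exact fun t ht₀ ht₁ => hbase t ⟨ht₀, by simpa using ht₁⟩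
    | succ n ih =>
      intro t ht₀ ht₁
      push_cast at ht₁
      rcases le_or_gt t (a + p) with hta | hta
      · exact hbase t ⟨ht₀, hta⟩
      · calc G t = G (t - p + p) := by rw [sub_add_cancel]
          _ ≤ G (t - p) := hstep _ (by linarith)
          _ ≤ B := ih _ (by linarith) (by linarith)
  obtain ⟨n, hn⟩ := exists_nat_ge ((t - (a + p)) / p)
  rw [div_le_iff₀ hp] at hn
  exact le_upto n t ht (by linarith)

lemma le_mul_exp_of_contraction {E : ℝ → ℝ} {t₀ a p c M : ℝ} (ha : t₀ ≤ a) (hp : 0 < p)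
    (hc : 0 ≤ c) (hM : 0 ≤ M) (hbase : ∀ t ∈ Set.Icc t₀ (a + p), E t ≤ M)
    (hcontr : ∀ t, a ≤ t → E (t + p) ≤ Real.exp (-c * p) * E t) {t : ℝ} (ht : t₀ ≤ t) :
    E t ≤ M * Real.exp (c * (a + p)) * Real.exp (-c * t) := by
  have weighted_le : Real.exp (c * t) * E t ≤ M * Real.exp (c * (a + p)) := by
    refine le_of_forall_add_le (G := fun t => Real.exp (c * t) * E t) ha hp ?_ ?_ ht
    · intro t ht
      rw [mul_comm M]
      have hexp : Real.exp (c * t) ≤ Real.exp (c * (a + p)) := by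
        gcongr
        exact ht.2
      calc Real.exp (c * t) * E t ≤ Real.exp (c * t) * M := by gcongr; exact hbase t ht
        _ ≤ Real.exp (c * (a + p)) * M := by gcongr
    · intro t hat
      calc Real.exp (c * (t + p)) * E (t + p)
          ≤ Real.exp (c * (t + p)) * (Real.exp (-c * p) * E t) := by
            gcongr
            exact hcontr t hat
        _ = Real.exp (c * t) * E t := by
            rw [← mul_assoc, ← Real.exp_add]
            ring_nf
  calc E t = Real.exp (c * t) * E t * Real.exp (-c * t) := by
        rw [mul_right_comm, ← Real.exp_add, neg_mul, add_neg_cancel, Real.exp_zero, one_mul]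
    _ ≤ M * Real.exp (c * (a + p)) * Real.exp (-c * t) := by gcongr

lemma exists_pos_le_exp_neg_mul {q p : ℝ} (hq : q < 1) (hp : 0 < p) :
    ∃ c > 0, q ≤ Real.exp (-c * p) := by
  refine ⟨(1 - q) / p, div_pos (sub_pos.2 hq) hp, ?_⟩
  calc q = -((1 - q) / p) * p + 1 := by field_simp; ring
    _ ≤ Real.exp (-((1 - q) / p) * p) := Real.add_one_le_exp _

section Profile

variable {R F : Type*} [CommRing R] [AddCommGroup F] [Module R F] {ℓ : ℝ} {κ a b : R} {h : ℝ → F}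

/-- `h` is the derivative of the D'Alembert profile of a wave on `(0, ℓ)` whose boundary feedback
alternates between an instantaneous law, with reflection coefficient `κ`, and a law delayed by
`2ℓ`, with coefficients `a` and `-b`. The recurrences hold on open intervals only, so the values of
`h` at the switching points `(2n + 1) ℓ` are not constrained. -/
structure IsSwitchedProfile (ℓ : ℝ) (κ a b : R) (h : ℝ → F) : Prop where
  instantaneous : ∀ i : ℕ, ∀ y ∈ Set.Ioo ((4 * (i : ℝ) + 3) * ℓ) ((4 * (i : ℝ) + 5) * ℓ),
    h y = κ • h (y - 2 * ℓ)
  delayed : ∀ i : ℕ, ∀ y ∈ Set.Ioo ((4 * (i : ℝ) + 5) * ℓ) ((4 * (i : ℝ) + 7) * ℓ),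
    h y = a • h (y - 2 * ℓ) - b • h (y - 4 * ℓ)

namespace IsSwitchedProfile

lemma apply_add_period_of_mem_Ioo_one_three (hh : IsSwitchedProfile ℓ κ a b h) (i : ℕ) {s : ℝ}
    (hs : s ∈ Set.Ioo ((4 * (i : ℝ) + 1) * ℓ) ((4 * (i : ℝ) + 3) * ℓ)) :
    h (s + 4 * ℓ) = (a * κ - b) • h s := by
  have hinst := hh.instantaneous i (s + 2 * ℓ) ⟨by linarith [hs.1], by linarith [hs.2]⟩
  have hdel := hh.delayed i (s + 4 * ℓ) ⟨by linarith [hs.1], by linarith [hs.2]⟩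
  rw [add_sub_cancel_right] at hinst hdel
  rw [hdel, show s + 4 * ℓ - 2 * ℓ = s + 2 * ℓ by ring, hinst, smul_smul, sub_smul]

lemma apply_add_period_of_mem_Ioo_three_five (hh : IsSwitchedProfile ℓ κ a b h) (i : ℕ) {s : ℝ}
    (hs : s ∈ Set.Ioo ((4 * (i : ℝ) + 3) * ℓ) ((4 * (i : ℝ) + 5) * ℓ)) :
    h (s + 4 * ℓ) = (a * κ - b) • h s := by
  have hnext := hh.instantaneous (i + 1) (s + 4 * ℓ)
    ⟨by push_cast; linarith [hs.1], by push_cast; linarith [hs.2]⟩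
  have hprev := hh.apply_add_period_of_mem_Ioo_one_three i (s := s - 2 * ℓ)
    ⟨by linarith [hs.1], by linarith [hs.2]⟩
  calc h (s + 4 * ℓ) = κ • h (s - 2 * ℓ + 4 * ℓ) := by rw [hnext]; ring_nf
    _ = (a * κ - b) • κ • h (s - 2 * ℓ) := by rw [hprev, smul_comm]
    _ = (a * κ - b) • h s := by rw [hh.instantaneous i s hs]

lemma ae_apply_add_period (hℓ : 0 < ℓ) (hh : IsSwitchedProfile ℓ κ a b h) :
    ∀ᵐ s : ℝ, ℓ < s → h (s + 4 * ℓ) = (a * κ - b) • h s := by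
  have ae_ne_switching : ∀ᵐ s : ℝ, s ∉ Set.range fun n : ℕ => (2 * (n : ℝ) + 1) * ℓ :=
    (Set.countable_range _).ae_notMem volume
  filter_upwards [ae_ne_switching] with s hs hℓs
  set i := ⌊(s - ℓ) / (4 * ℓ)⌋₊
  have hlower : (4 * (i : ℝ) + 1) * ℓ ≤ s := by
    have := (le_div_iff₀ (by positivity)).1
      (Nat.floor_le (div_nonneg (sub_nonneg.2 hℓs.le) (by positivity : 0 ≤ 4 * ℓ)))
    linarith
  have hupper : s < (4 * (i : ℝ) + 5) * ℓ := by
    have := (div_lt_iff₀ (by positivity)).1 (Nat.lt_floor_add_one ((s - ℓ) / (4 * ℓ)))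
    linarith
  have hne_left : (4 * (i : ℝ) + 1) * ℓ ≠ s := fun h => hs ⟨2 * i, by push_cast; linarith⟩
  rcases lt_trichotomy s ((4 * (i : ℝ) + 3) * ℓ) with hlt | heq | hgt
  · exact hh.apply_add_period_of_mem_Ioo_one_three i ⟨hlower.lt_of_ne hne_left, hlt⟩
  · exact absurd ⟨2 * i + 1, by push_cast; linarith⟩ hs
  · exact hh.apply_add_period_of_mem_Ioo_three_five i ⟨hgt, hupper⟩

end IsSwitchedProfile

end Profile

section Energy

variable {F : Type*} [NormedAddCommGroup F] {ℓ t : ℝ} {h : ℝ → F}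

/-- The energy at time `t` of the wave on `(0, ℓ)` whose D'Alembert profile has derivative `h`. -/
noncomputable def profileEnergy (ℓ : ℝ) (h : ℝ → F) (t : ℝ) : ℝ :=
  ∫ s in (t - ℓ)..(t + ℓ), ‖h s‖ ^ 2

lemma profileEnergy_nonneg (hℓ : 0 ≤ ℓ) : 0 ≤ profileEnergy ℓ h t :=
  intervalIntegral.integral_nonneg (by linarith) fun s _ => sq_nonneg ‖h s‖

lemma profileEnergy_le_integral {x y : ℝ} (hℓ : 0 ≤ ℓ)
    (hint : IntervalIntegrable (fun s => ‖h s‖ ^ 2) volume x y) (hx : x ≤ t - ℓ)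
    (hy : t + ℓ ≤ y) : profileEnergy ℓ h t ≤ ∫ s in x..y, ‖h s‖ ^ 2 :=
  intervalIntegral.integral_mono_interval hx (by linarith) hy
    (Filter.Eventually.of_forall fun s => sq_nonneg ‖h s‖) hint

lemma profileEnergy_add_of_ae_eq_smul {𝕜 : Type*} [NormedField 𝕜] [NormedSpace 𝕜 F] {r : 𝕜}
    {x p : ℝ} (hℓ : 0 ≤ ℓ) (hshift : ∀ᵐ s : ℝ, x < s → h (s + p) = r • h s) (ht : x + ℓ ≤ t) :
    profileEnergy ℓ h (t + p) = ‖r‖ ^ 2 * profileEnergy ℓ h t := by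
  have integrand_shift : ∀ᵐ s : ℝ, s ∈ Set.uIoc (t - ℓ) (t + ℓ) →
      ‖h (s + p)‖ ^ 2 = ‖r‖ ^ 2 * ‖h s‖ ^ 2 := by
    filter_upwards [hshift] with s hs hmem
    rw [Set.uIoc_of_le (by linarith)] at hmem
    rw [hs (by linarith [hmem.1]), norm_smul, mul_pow]
  calc profileEnergy ℓ h (t + p) = ∫ s in (t - ℓ)..(t + ℓ), ‖h (s + p)‖ ^ 2 := by
        rw [intervalIntegral.integral_comp_add_right (fun s => ‖h s‖ ^ 2), sub_add_eq_add_sub,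
          add_right_comm, profileEnergy]
    _ = ‖r‖ ^ 2 * profileEnergy ℓ h t := by
        rw [intervalIntegral.integral_congr_ae integrand_shift,
          intervalIntegral.integral_const_mul, profileEnergy]

lemma IsSwitchedProfile.profileEnergy_le_mul_exp {𝕜 : Type*} [NormedField 𝕜] [NormedSpace 𝕜 F]
    {κ a b : 𝕜} {c : ℝ} (hℓ : 0 < ℓ) (hc : 0 ≤ c)
    (hrate : ‖a * κ - b‖ ^ 2 ≤ Real.exp (-c * (4 * ℓ))) (hh : IsSwitchedProfile ℓ κ a b h)
    (hint : IntervalIntegrable (fun s => ‖h s‖ ^ 2) volume (-ℓ) (7 * ℓ)) (ht : 0 ≤ t) :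
    profileEnergy ℓ h t
      ≤ (∫ s in (-ℓ)..(7 * ℓ), ‖h s‖ ^ 2) * Real.exp (c * (6 * ℓ)) * Real.exp (-c * t) := by
  rw [show 6 * ℓ = 2 * ℓ + 4 * ℓ by ring]
  refine le_mul_exp_of_contraction (t₀ := 0) (by linarith) (by linarith) hc ?_ ?_ ?_ ht
  · exact intervalIntegral.integral_nonneg (by linarith) fun s _ => sq_nonneg ‖h s‖
  · intro t ht
    exact profileEnergy_le_integral hℓ.le hint (by linarith [ht.1]) (by linarith [ht.2])
  · intro t ht
    calc profileEnergy ℓ h (t + 4 * ℓ) = ‖a * κ - b‖ ^ 2 * profileEnergy ℓ h t :=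
          profileEnergy_add_of_ae_eq_smul hℓ.le (hh.ae_apply_add_period hℓ) (by linarith)
      _ ≤ Real.exp (-c * (4 * ℓ)) * profileEnergy ℓ h t := by
          gcongr
          exact profileEnergy_nonneg hℓ.le

end Energy

theorem energy_decay_switched_boundary_general {𝕜 F : Type*} [NormedField 𝕜]
    [NormedAddCommGroup F] [NormedSpace 𝕜 F] {ℓ : ℝ} {κ a b : 𝕜} (hℓ : 0 < ℓ)
    (hr : ‖a * κ - b‖ < 1) :
    ∃ C₂ > (0 : ℝ), ∀ h : ℝ → F, IsSwitchedProfile ℓ κ a b h →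
      IntervalIntegrable (fun s => ‖h s‖ ^ 2) volume (-ℓ) (7 * ℓ) →
      ∃ C₁ ≥ (0 : ℝ), ∀ t, 0 ≤ t → profileEnergy ℓ h t ≤ C₁ * Real.exp (-C₂ * t) := by
  have hr_sq : ‖a * κ - b‖ ^ 2 < 1 := pow_lt_one₀ (norm_nonneg _) hr two_ne_zero
  obtain ⟨c, hc, hrate⟩ := exists_pos_le_exp_neg_mul hr_sq (by positivity : 0 < 4 * ℓ)
  refine ⟨c, hc, fun h hh hint =>
    ⟨_, ?_, fun t ht => hh.profileEnergy_le_mul_exp hℓ hc.le hrate hint ht⟩⟩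
  have hbase : 0 ≤ ∫ s in (-ℓ)..(7 * ℓ), ‖h s‖ ^ 2 :=
    intervalIntegral.integral_nonneg (by linarith) fun s _ => sq_nonneg ‖h s‖
  positivity

lemma abs_period_ratio_lt_one {μ₁ μ₂ : ℝ} (hμ₁ : μ₁ ≠ 1)
    (hcond : (1 < μ₂ ∧ μ₂ < μ₁) ∨ (μ₁ < μ₂ ∧ μ₂ < 1)) :
    |(μ₂ - 1) * ((1 + μ₁) / (μ₁ - 1)) - μ₂| < 1 := by
  have ratio_eq : (μ₂ - 1) * ((1 + μ₁) / (μ₁ - 1)) - μ₂ = 2 * ((μ₂ - 1) / (μ₁ - 1)) - 1 := by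
    have := sub_ne_zero.2 hμ₁
    field_simp
    ring
  have quotient_mem : (μ₂ - 1) / (μ₁ - 1) ∈ Set.Ioo 0 1 := by
    rcases hcond with ⟨h₁, h₂⟩ | ⟨h₁, h₂⟩
    · exact ⟨div_pos (by linarith) (by linarith), (div_lt_one (by linarith)).2 (by linarith)⟩
    · exact ⟨div_pos_of_neg_of_neg (by linarith) (by linarith),
        (div_lt_one_of_neg (by linarith)).2 (by linarith)⟩
  rw [ratio_eq, abs_lt]
  exact ⟨by linarith [quotient_mem.1], by linarith [quotient_mem.2]⟩

/-- Exponential decay of the energy for the switched boundary damping: if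
`1 < μ₂ < μ₁` or `μ₁ < μ₂ < 1` and `h` is measurable, locally square-integrable
and satisfies the recurrences `h(y) = κ h(y-2ℓ)` on `((4i+3)ℓ, (4i+5)ℓ)` and
`h(y) = (μ₂-1) h(y-2ℓ) - μ₂ h(y-4ℓ)` on `((4i+5)ℓ, (4i+7)ℓ)`, with
`κ = (1+μ₁)/(μ₁-1)`, then the energy `E(t) = ∫_{t-ℓ}^{t+ℓ} h(s)² ds` decays
exponentially with a rate depending only on `ℓ`, `μ₁` and `μ₂`. -/
theorem energy_decay_switched_boundary (ℓ μ₁ μ₂ : ℝ) (hℓ : 0 < ℓ) (hμ₁ : μ₁ ≠ 1)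
    (hcond : (1 < μ₂ ∧ μ₂ < μ₁) ∨ (μ₁ < μ₂ ∧ μ₂ < 1)) :
    ∃ C₂ > (0 : ℝ), ∀ h : ℝ → ℝ,
      Measurable h →
      LocallyIntegrable (fun s => h s ^ 2) volume →
      (∀ i : ℕ, ∀ y ∈ Set.Ioo ((4 * (i : ℝ) + 3) * ℓ) ((4 * (i : ℝ) + 5) * ℓ),
        h y = (1 + μ₁) / (μ₁ - 1) * h (y - 2 * ℓ)) →
      (∀ i : ℕ, ∀ y ∈ Set.Ioo ((4 * (i : ℝ) + 5) * ℓ) ((4 * (i : ℝ) + 7) * ℓ),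
        h y = (μ₂ - 1) * h (y - 2 * ℓ) - μ₂ * h (y - 4 * ℓ)) →
      ∃ C₁ ≥ (0 : ℝ), ∀ t : ℝ, 0 ≤ t →
        (∫ s in (t - ℓ)..(t + ℓ), h s ^ 2) ≤ C₁ * Real.exp (-C₂ * t) := by
  obtain ⟨C₂, hC₂, hdecay⟩ := energy_decay_switched_boundary_general (𝕜 := ℝ) (F := ℝ) hℓ
    (abs_period_ratio_lt_one hμ₁ hcond)
  simp only [profileEnergy, Real.norm_eq_abs, sq_abs] at hdecay
  exact ⟨C₂, hC₂, fun h _ hint hinst hdel => hdecay h ⟨hinst, hdel⟩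
    (hint.integrableOn_isCompact isCompact_uIcc).intervalIntegrable⟩
end

section
/- Let c ≥ 0 be a real number, let s₀ < s₁ be real numbers, and let F : [s₀, s₁] → ℝ be differentiable with F(t) ≥ 0 and F′(t) ≤ c · √(F(t)) for all t ∈ [s₀, s₁]. Then √(F(t)) ≤ √(F(s₀)) + (c/2)(t − s₀) for all t ∈ [s₀, s₁]. -/
/-!
`√F` need not be differentiable where `F` vanishes, so `F` is compared with the square of a barrier
`B` instead. Perturbing `B` to `g x = B x + ε (1 + (x - a))` makes it positive, and wherever
`F = g²` one has `F' ≤ 2 B' g < 2 (B' + ε) g = (g²)'`, so `F` cannot cross `g²`. Letting `ε → 0`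
gives `F ≤ B²`; for `F' ≤ c √F` the barrier is `B t = √(F a) + (1/2) ∫ₐᵗ c`.
-/

open Set MeasureTheory

theorem le_sq_of_deriv_right_le_two_mul_sqrt {a b : ℝ} {f f' B B' : ℝ → ℝ}
    (hf : ContinuousOn f (Icc a b))
    (hf' : ∀ x ∈ Ico a b, HasDerivWithinAt f (f' x) (Ici x) x)
    (hB : ContinuousOn B (Icc a b))
    (hB' : ∀ x ∈ Ico a b, HasDerivWithinAt B (B' x) (Ici x) x)
    (hB_nonneg : ∀ x ∈ Icc a b, 0 ≤ B x) (ha : f a ≤ B a ^ 2)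
    (bound : ∀ x ∈ Ico a b, f' x ≤ 2 * B' x * √(f x)) :
    ∀ ⦃x⦄, x ∈ Icc a b → f x ≤ B x ^ 2 := by
  have perturbed : ∀ x ∈ Icc a b, ∀ ε ∈ Ioi (0 : ℝ), f x ≤ (B x + ε * (1 + (x - a))) ^ 2 := by
    intro x hx ε hε
    have barrier_pos : ∀ y ∈ Ico a b, 0 < B y + ε * (1 + (y - a)) := fun y hy =>
      add_pos_of_nonneg_of_pos (hB_nonneg y (Ico_subset_Icc_self hy))
        (mul_pos hε (by linarith [hy.1]))
    have barrier_deriv : ∀ y ∈ Ico a b,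
        HasDerivWithinAt (fun z => (B z + ε * (1 + (z - a))) ^ 2)
          (2 * (B y + ε * (1 + (y - a))) * (B' y + ε)) (Ici y) y := fun y hy => by
      simpa using ((hB' y hy).fun_add
        ((((hasDerivWithinAt_id y _).sub_const a).const_add 1).const_mul ε)).fun_pow 2
    have initial : f a ≤ (B a + ε * (1 + (a - a))) ^ 2 := by
      have hBa : 0 ≤ B a := hB_nonneg a (left_mem_Icc.2 (hx.1.trans hx.2))
      refine ha.trans (pow_le_pow_left₀ hBa ?_ 2)
      simpa using hε.le
    refine image_le_of_deriv_right_lt_deriv_boundary' hf hf' initial (by fun_prop)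
      barrier_deriv (fun y hy touch => ?_) hx
    have hg := barrier_pos y hy
    calc f' y ≤ 2 * B' y * (B y + ε * (1 + (y - a))) := by
          simpa only [touch, Real.sqrt_sq hg.le] using bound y hy
      _ < 2 * (B y + ε * (1 + (y - a))) * (B' y + ε) := by
          linarith [mul_pos hg hε]
  intro x hx
  have limit : ContinuousWithinAt (fun ε => (B x + ε * (1 + (x - a))) ^ 2) (Ioi 0) 0 := by
    fun_prop
  simpa using continuousWithinAt_const.closure_le (by simp) limit (perturbed x hx)

theorem hasDerivWithinAt_Ici_integral {E : Type*} [NormedAddCommGroup E]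
    [NormedSpace ℝ E] [CompleteSpace E] {a b x : ℝ} {c : ℝ → E}
    (hc : ContinuousOn c (Icc a b)) (hx : x ∈ Ico a b) :
    HasDerivWithinAt (fun t => ∫ s in a..t, c s) (c x) (Ici x) x := by
  have hxI := Ico_subset_Icc_self hx
  have : Fact (x ∈ Icc a b) := ⟨hxI⟩
  have integrable : IntervalIntegrable c volume a x :=
    (hc.mono (Icc_subset_Icc_right hx.2.le)).intervalIntegrable_of_Icc hx.1
  exact (intervalIntegral.integral_hasDerivWithinAt_right integrable
    (hc.stronglyMeasurableAtFilter_nhdsWithin measurableSet_Icc x)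
    (hc x hxI)).mono_of_mem_nhdsWithin (Icc_mem_nhdsGE_of_mem hx)

theorem sqrt_energy_growth_general {a b : ℝ} {F F' c : ℝ → ℝ}
    (hF : ContinuousOn F (Icc a b))
    (hderiv : ∀ t ∈ Ico a b, HasDerivWithinAt F (F' t) (Ici t) t)
    (hF_nonneg : ∀ t ∈ Icc a b, 0 ≤ F t)
    (hc : ContinuousOn c (Icc a b)) (hc_nonneg : ∀ t ∈ Icc a b, 0 ≤ c t)
    (hF' : ∀ t ∈ Ico a b, F' t ≤ c t * √(F t)) :
    ∀ t ∈ Icc a b, √(F t) ≤ √(F a) + (∫ s in a..t, c s) / 2 := by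
  intro t ht
  have hab : a ≤ b := ht.1.trans ht.2
  have barrier_nonneg : ∀ x ∈ Icc a b, 0 ≤ √(F a) + (∫ s in a..x, c s) / 2 := fun x hx => by
    have : 0 ≤ ∫ s in a..x, c s := intervalIntegral.integral_nonneg hx.1 fun s hs =>
      hc_nonneg s (Icc_subset_Icc_right hx.2 hs)
    positivity
  have barrier_cont : ContinuousOn (fun x => √(F a) + (∫ s in a..x, c s) / 2) (Icc a b) :=
    ((intervalIntegral.continuousOn_primitive_interval'
      (hc.intervalIntegrable_of_Icc hab) left_mem_uIcc).mono Icc_subset_uIcc).div_const 2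
      |>.const_add _
  rw [Real.sqrt_le_left (barrier_nonneg t ht)]
  refine le_sq_of_deriv_right_le_two_mul_sqrt hF hderiv barrier_cont
    (fun x hx => ((hasDerivWithinAt_Ici_integral hc hx).div_const 2).const_add _)
    barrier_nonneg ?_ (fun x hx => ?_) ht
  · simp [Real.sq_sqrt (hF_nonneg a (left_mem_Icc.2 hab))]
  · simpa only [mul_div_cancel₀ _ (two_ne_zero' ℝ)] using hF' x hx

/-- Differential-inequality step: if `F ≥ 0` is differentiable on `[s₀, s₁]`
with `F' ≤ c √F` there (`c ≥ 0`), then `√F(t) ≤ √F(s₀) + (c/2)(t - s₀)` on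
`[s₀, s₁]`. -/
theorem sqrt_energy_growth (c s₀ s₁ : ℝ) (hc : 0 ≤ c) (hs : s₀ < s₁)
    (F F' : ℝ → ℝ)
    (hderiv : ∀ t ∈ Set.Icc s₀ s₁, HasDerivWithinAt F (F' t) (Set.Icc s₀ s₁) t)
    (hFnonneg : ∀ t ∈ Set.Icc s₀ s₁, 0 ≤ F t)
    (hF' : ∀ t ∈ Set.Icc s₀ s₁, F' t ≤ c * Real.sqrt (F t)) :
    ∀ t ∈ Set.Icc s₀ s₁,
      Real.sqrt (F t) ≤ Real.sqrt (F s₀) + c / 2 * (t - s₀) := by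
  intro t ht
  have h := sqrt_energy_growth_general (HasDerivWithinAt.continuousOn hderiv)
    (fun x hx => (hderiv x (Ico_subset_Icc_self hx)).mono_of_mem_nhdsWithin
      (Icc_mem_nhdsGE_of_mem hx))
    hFnonneg continuousOn_const (fun _ _ => hc) (fun x hx => hF' x (Ico_subset_Icc_self hx)) t ht
  rwa [intervalIntegral.integral_const, smul_eq_mul, mul_comm, mul_div_right_comm] at h
end
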